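/- Suppose q < |a_1⋯a_{n+1} b_1⋯b_{n+1}| (so |u| < 1), fix i ∈ {1,…,n+1}, and assume a_j b_k ∉ qᶻ for all 1 ≤ j ≤ n+1 and all k ≠ i, and b_k/b_l ∉ qᶻ for all k ≠ l with k, l ≠ i. Then the series defining J̄(b̂_i) converges absolutely and the regularization evaluates as 𝒥̄_i = (1−q)ⁿ (q)_∞ⁿ ∏_{j=1}^{n+1} ∏_{k=1}^{n+1} (q a_j⁻¹ b_k⁻¹)_∞ / (q a_1⁻¹⋯a_{n+1}⁻¹ b_1⁻¹⋯b_{n+1}⁻¹)_∞. (Evaluation of the regularized truncated dual Dixon–Anderson sum; Theorem 4.5 of the paper.) -/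

import Mathlib

/-!
Write `c = b i` and `z_k` for the remaining parameters, and view the multiple series as a function
`F(c)`. It satisfies a first-order `q`-difference equation, which is iterated towards `c = ∞`, where
the series collapses to a single term.

With `v = (a_1⋯a_{n+1} b_1⋯b_{n+1})⁻¹` the equation is `(1 - v) F(qc) = ∏_j (1 - 1/(a_j c)) F(c)`.
Since the product of differences is a Vandermonde determinant, `F(c)` and `F(qc)` are both
determinants of one-variable moments `S_{k,m} = ∑_ν v^ν w(x) (-x)^m`, `x = z_k q^ν`, `0 ≤ m ≤ n`: up
to factors, `F(c)` has the columns `S_{m+1}` and `F(qc)` the columns `S_{m+1} + c S_m`. By the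
functional equation of the weight `w`, the sum of `v^ν w(x) (∏_j (1 - x/b_j) - v ∏_j (1 - a_j x))`
telescopes to zero. The polynomial in parentheses has degree at most `n` by the choice of `v`, so
this is a linear relation between the `n + 1` columns of moments, and it makes the two determinants
proportional.

Replacing `c` by `c q^{-N}` multiplies `u` by `q^N`, so by dominated convergence only the term
`ν = 0` survives as `N → ∞`, while the factors of the recurrence build up `(u)_∞` and
`∏_j (q/(a_j c))_∞`. In the surviving term, the factors indexed by `(k, l)` and `(l, k)` combine
with `z_k - z_l` into `z_k θ(z_l/z_k)`.
-/

open scoped BigOperators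
open Finset

/-- The infinite q-Pochhammer symbol `(a)_∞ = ∏_{i=0}^∞ (1 - qⁱ a)`. -/
noncomputable def qp (q a : ℂ) : ℂ := ∏' i : ℕ, (1 - q ^ i * a)

/-- The theta function `θ(a) = (a)_∞ (q/a)_∞`. -/
noncomputable def th (q a : ℂ) : ℂ := qp q a * qp q (q / a)

/-- Summand of the truncated dual Jackson integral of Dixon–Anderson type `J̄(b̂ᵢ)`,
with `u = q a₁⁻¹⋯a_{n+1}⁻¹ b₁⁻¹⋯b_{n+1}⁻¹` and `β = b ∘ i.succAbove`. -/
noncomputable def jbarTerm {n : ℕ} (q : ℂ) (a b : Fin (n + 1) → ℂ) (i : Fin (n + 1))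
    (ν : Fin n → ℕ) : ℂ :=
  (q * (∏ j, a j)⁻¹ * (∏ j, b j)⁻¹) ^ (∑ k, ν k) *
    (∏ k, ∏ j, qp q (q * (b j)⁻¹ * (b (i.succAbove k) * q ^ ν k)) /
        qp q (a j * (b (i.succAbove k) * q ^ ν k))) *
    ∏ k, ∏ l ∈ Finset.Ioi k, (b (i.succAbove k) * q ^ ν k - b (i.succAbove l) * q ^ ν l)

/-- The truncated dual Jackson integral of Dixon–Anderson type `J̄(b̂ᵢ)`. -/
noncomputable def jbarSum {n : ℕ} (q : ℂ) (a b : Fin (n + 1) → ℂ) (i : Fin (n + 1)) : ℂ :=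
  (1 - q) ^ n * ∑' ν : Fin n → ℕ, jbarTerm q a b i ν

/-- The regularization `𝒥̄ᵢ` of the truncated dual Dixon–Anderson sum. -/
noncomputable def jbarReg {n : ℕ} (q : ℂ) (a b : Fin (n + 1) → ℂ) (i : Fin (n + 1)) : ℂ :=
  jbarSum q a b i * (∏ k : Fin n, ∏ j, th q (a j * b (i.succAbove k))) /
    ∏ k : Fin n, ∏ l ∈ Finset.Ioi k,
      b (i.succAbove k) * th q (b (i.succAbove l) / b (i.succAbove k))

open Filter Topology Polynomial Function

/-! ### The infinite `q`-Pochhammer symbol -/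

section QPochhammer

variable {q : ℂ}

lemma summable_norm_neg_pow_mul (hq : ‖q‖ < 1) (x : ℂ) :
    Summable fun m : ℕ => ‖-(q ^ m * x)‖ := by
  simpa only [norm_neg, norm_mul, norm_pow] using
    (summable_geometric_of_lt_one (norm_nonneg _) hq).mul_right ‖x‖

lemma multipliable_one_sub_pow_mul (hq : ‖q‖ < 1) (x : ℂ) :
    Multipliable fun m : ℕ => 1 - q ^ m * x := by
  simpa only [sub_eq_add_neg] using
    multipliable_one_add_of_summable (summable_norm_neg_pow_mul hq x)

lemma tendsto_prod_range_qp (hq : ‖q‖ < 1) (x : ℂ) :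
    Tendsto (fun N : ℕ => ∏ m ∈ range N, (1 - q ^ m * x)) atTop (𝓝 (qp q x)) :=
  (multipliable_one_sub_pow_mul hq x).hasProd.tendsto_prod_nat

lemma qp_eq_one_sub_mul_qp (hq : ‖q‖ < 1) (x : ℂ) : qp q x = (1 - x) * qp q (q * x) := by
  have h := tprod_eq_zero_mul' (f := fun m : ℕ => 1 - q ^ m * x)
    (by simpa only [pow_succ, mul_assoc] using multipliable_one_sub_pow_mul hq (q * x))
  simpa only [qp, pow_zero, one_mul, pow_succ, mul_assoc] using h

lemma qp_ne_zero (hq : ‖q‖ < 1) {x : ℂ} (hx : ∀ m : ℕ, q ^ m * x ≠ 1) : qp q x ≠ 0 := by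
  simp only [qp, sub_eq_add_neg]
  refine tprod_one_add_ne_zero_of_summable (fun m => ?_) (summable_norm_neg_pow_mul hq x)
  rw [← sub_eq_add_neg]
  exact sub_ne_zero.2 (hx m).symm

lemma qp_ne_zero_of_norm_lt_one (hq : ‖q‖ < 1) {x : ℂ} (hx : ‖x‖ < 1) : qp q x ≠ 0 := by
  refine qp_ne_zero hq fun m hm => ?_
  have hlt : ‖q ^ m * x‖ < 1 := by
    rw [norm_mul, norm_pow]
    exact mul_lt_one_of_nonneg_of_lt_one_right (pow_le_one₀ (norm_nonneg _) hq.le)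
      (norm_nonneg _) hx
  simp [hm] at hlt

lemma th_ne_zero (hq : ‖q‖ < 1) (hq0 : q ≠ 0) {x : ℂ} (hx : ∀ m : ℤ, x ≠ q ^ m) :
    th q x ≠ 0 := by
  refine mul_ne_zero (qp_ne_zero hq fun m hm => hx (-m) ?_) (qp_ne_zero hq fun m hm => ?_)
  · rw [zpow_neg, zpow_natCast]
    exact eq_inv_of_mul_eq_one_right hm
  · rcases eq_or_ne x 0 with rfl | hx0
    · simp at hm
    · refine hx (m + 1) ?_
      rw [← mul_div_assoc, div_eq_one_iff_eq hx0] at hm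
      rw [zpow_add_one₀ hq0, zpow_natCast, hm]

@[simp]
lemma qp_zero_right (q : ℂ) : qp q 0 = 1 := by
  simp [qp]

lemma norm_qp_sub_one_le (hq : ‖q‖ < 1) (x : ℂ) :
    ‖qp q x - 1‖ ≤ Real.exp (‖x‖ / (1 - ‖q‖)) - 1 := by
  refine le_of_tendsto ((tendsto_prod_range_qp hq x).sub_const 1).norm
    (Eventually.of_forall fun N => ?_)
  have hsum : ∑ m ∈ range N, ‖-(q ^ m * x)‖ ≤ ‖x‖ / (1 - ‖q‖) := by
    refine ((summable_norm_neg_pow_mul hq x).sum_le_tsum _ fun _ _ => norm_nonneg _).trans_eq ?_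
    simp only [norm_neg, norm_mul, norm_pow]
    rw [tsum_mul_right, tsum_geometric_of_lt_one (norm_nonneg _) hq, inv_mul_eq_div]
  simp only [sub_eq_add_neg (1 : ℂ)]
  exact (Finset.norm_prod_one_add_sub_one_le _ _).trans
    (sub_le_sub_right (Real.exp_le_exp.2 hsum) 1)

lemma norm_qp_le (hq : ‖q‖ < 1) (x : ℂ) : ‖qp q x‖ ≤ Real.exp (‖x‖ / (1 - ‖q‖)) := by
  have h := norm_le_norm_add_norm_sub' (qp q x) 1
  rw [norm_one] at h
  linarith [norm_qp_sub_one_le hq x]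

lemma tendsto_qp_one {α : Type*} {l : Filter α} {f : α → ℂ} (hq : ‖q‖ < 1)
    (hf : Tendsto f l (𝓝 0)) : Tendsto (fun t => qp q (f t)) l (𝓝 1) := by
  refine tendsto_iff_norm_sub_tendsto_zero.2 <|
    squeeze_zero (fun _ => norm_nonneg _) (fun t => norm_qp_sub_one_le hq (f t)) ?_
  have hexp : Tendsto (fun t => Real.exp (‖f t‖ / (1 - ‖q‖)) - 1) l
      (𝓝 (Real.exp (‖(0 : ℂ)‖ / (1 - ‖q‖)) - 1)) :=
    ((Real.continuous_exp.tendsto _).comp (hf.norm.div_const _)).sub_const 1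
  simpa using hexp

lemma exists_norm_inv_qp_mul_pow_le (hq : ‖q‖ < 1) (x : ℂ) :
    ∃ C, ∀ m : ℕ, ‖(qp q (x * q ^ m))⁻¹‖ ≤ C := by
  have hx : Tendsto (fun m : ℕ => x * q ^ m) atTop (𝓝 0) := by
    simpa using (tendsto_pow_atTop_nhds_zero_of_norm_lt_one hq).const_mul x
  obtain ⟨C, hC⟩ := ((tendsto_qp_one hq hx).inv₀ one_ne_zero).norm.bddAbove_range
  exact ⟨C, fun m => hC ⟨m, rfl⟩⟩

lemma qp_mul_eq_prod_qp_mul_of_tendsto {ι : Type*} [Fintype ι] (hq : ‖q‖ < 1) {x : ℂ} {y : ι → ℂ}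
    {f : ℕ → ℂ} {L : ℂ} (hf : Tendsto f atTop (𝓝 L))
    (hrec : ∀ N, (1 - q ^ N * x) * f N = (∏ j, (1 - q ^ N * y j)) * f (N + 1)) :
    qp q x * f 0 = (∏ j, qp q (y j)) * L := by
  have hiter : ∀ N, (∏ j, ∏ m ∈ range N, (1 - q ^ m * y j)) * f N =
      (∏ m ∈ range N, (1 - q ^ m * x)) * f 0 := by
    intro N
    induction N with
    | zero => simp
    | succ N ih =>
      simp only [prod_range_succ, prod_mul_distrib]
      rw [mul_assoc, ← hrec, mul_left_comm, ih]
      ring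
  refine tendsto_nhds_unique ((tendsto_prod_range_qp hq x).mul_const (f 0)) ?_
  exact ((tendsto_finsetProd univ fun j _ => tendsto_prod_range_qp hq (y j)).mul hf).congr hiter

/-- The theta functions come from pairing the factors `(k, l)` and `(l, k)` of the double product
with the difference `z k - z l`. -/
lemma prod_qp_mul_prod_sub {n : ℕ} (hq : ‖q‖ < 1) {z : Fin n → ℂ} (hz : ∀ k, z k ≠ 0) :
    (∏ k, ∏ l, qp q (q * (z l)⁻¹ * z k)) * ∏ k, ∏ l ∈ Ioi k, (z k - z l) =
      qp q q ^ n * ∏ k, ∏ l ∈ Ioi k, z k * th q (z l / z k) := by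
  have hsplit : ∏ k, ∏ l, qp q (q * (z l)⁻¹ * z k) = qp q q ^ n *
      ∏ k, ∏ l ∈ Ioi k, (qp q (q * (z k)⁻¹ * z l) * qp q (q * (z l)⁻¹ * z k)) := by
    have hdiag : qp q q ^ n = ∏ k, qp q (q * (z k)⁻¹ * z k) := by
      simp [mul_assoc, inv_mul_cancel₀ (hz _)]
    rw [prod_prod_Ioi_mul_eq_prod_prod_off_diag (fun k l => qp q (q * (z l)⁻¹ * z k)),
      Finset.prod_comm, hdiag, ← prod_mul_distrib]
    exact prod_congr rfl fun k _ => Fintype.prod_eq_mul_prod_compl k _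
  have hpair : ∀ k l, qp q (q * (z k)⁻¹ * z l) * qp q (q * (z l)⁻¹ * z k) * (z k - z l) =
      z k * th q (z l / z k) := by
    intro k l
    have hkl : q / (z l / z k) = q * (z l)⁻¹ * z k := by
      rw [div_div_eq_mul_div]
      ring
    have hlk : q * (z l / z k) = q * (z k)⁻¹ * z l := by ring
    rw [th, qp_eq_one_sub_mul_qp hq (z l / z k), hkl, hlk]
    field_simp [hz k]
  rw [hsplit, mul_assoc]
  simp only [← prod_mul_distrib, hpair]

end QPochhammer

/-! ### Multiple sums of products and determinants -/

section MultipleSums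

variable {R : Type*} [NormedCommRing R] {n : ℕ}

lemma summable_norm_prod_apply {κ : Fin n → Type*} {f : ∀ k, κ k → R}
    (hf : ∀ k, Summable fun t => ‖f k t‖) :
    Summable fun ν : ∀ k, κ k => ‖∏ k, f k (ν k)‖ := by
  induction n with
  | zero => exact (hasSum_fintype _).summable
  | succ n ih =>
    rw [← (Fin.consEquiv κ).summable_iff]
    refine ((hf 0).mul_norm (ih fun k => hf k.succ)).congr fun p => ?_
    simp [Fin.prod_univ_succ, Fin.consEquiv]

lemma hasSum_prod_apply [CompleteSpace R] {κ : Fin n → Type*} {f : ∀ k, κ k → R}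
    (hf : ∀ k, Summable fun t => ‖f k t‖) :
    HasSum (fun ν : ∀ k, κ k => ∏ k, f k (ν k)) (∏ k, ∑' t, f k t) := by
  induction n with
  | zero => simp
  | succ n ih =>
    have htail := ih fun k => hf k.succ
    rw [(summable_norm_prod_apply hf).of_norm.hasSum_iff, ← (Fin.consEquiv κ).tsum_eq,
      Fin.prod_univ_succ, ← htail.tsum_eq,
      tsum_mul_tsum_of_summable_norm (hf 0) (summable_norm_prod_apply fun k => hf k.succ)]
    exact tsum_congr fun p => by simp [Fin.prod_univ_succ, Fin.consEquiv]

lemma hasSum_det_apply [CompleteSpace R] {κ : Fin n → Type*} {f : ∀ k, Fin n → κ k → R}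
    (hf : ∀ k m, Summable fun t => ‖f k m t‖) :
    HasSum (fun ν : ∀ k, κ k => (Matrix.of fun k m => f k m (ν k)).det)
      (Matrix.of fun k m => ∑' t, f k m t).det := by
  simp only [← Matrix.det_transpose (Matrix.of _), Matrix.det_apply, Matrix.transpose_apply,
    Matrix.of_apply]
  exact hasSum_sum fun σ _ => (hasSum_prod_apply fun k => hf k (σ k)).const_smul _

/-- The product of differences is the Vandermonde determinant of `-x`; this is why the moments
are taken with powers of `-x`. -/
lemma hasSum_prod_mul_prod_sub [CompleteSpace R] {κ : Fin n → Type*} {w x : ∀ k, κ k → R}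
    (h : ∀ k (m : ℕ), Summable fun t => ‖w k t * (-x k t) ^ m‖) :
    HasSum (fun ν : ∀ k, κ k =>
        (∏ k, w k (ν k)) * ∏ k, ∏ l ∈ Ioi k, (x k (ν k) - x l (ν l)))
      (Matrix.of fun k m : Fin n => ∑' t, w k t * (-x k t) ^ (m : ℕ)).det := by
  refine (hasSum_det_apply fun k m => h k m).congr_fun fun ν => ?_
  have hvand := Matrix.det_vandermonde fun k => -x k (ν k)
  simp only [neg_sub_neg] at hvand
  rw [← hvand, ← Matrix.det_mul_column]
  rfl

end MultipleSums

/-- Both determinants are computed from the square matrix with the row `(1, c, …, c ^ n)` on top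
of `S`: clearing that row by column operations gives the left-hand side, and replacing the first
column by the combination of the columns with coefficients `p` gives the right-hand side. -/
lemma mul_det_succ_sub_smul_castSucc {R : Type*} [CommRing R] {n : ℕ} {S : Fin n → Fin (n + 1) → R}
    {p : Fin (n + 1) → R} (h : ∀ k, ∑ m, p m * S k m = 0) (c : R) :
    p 0 * (Matrix.of fun k m : Fin n => S k m.succ - c * S k m.castSucc).det =
      (∑ m, p m * c ^ (m : ℕ)) * (Matrix.of fun k m : Fin n => S k m.succ).det := by
  let A : Matrix (Fin (n + 1)) (Fin (n + 1)) R :=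
    Matrix.of (Fin.cons (fun m => c ^ (m : ℕ)) S)
  let B : Matrix (Fin (n + 1)) (Fin (n + 1)) R :=
    Matrix.of fun r => Fin.cons (A r 0) fun m : Fin n => A r m.succ - c * A r m.castSucc
  have hA_zero : ∀ m, A 0 m = c ^ (m : ℕ) := fun _ => rfl
  have hA_succ : ∀ k m, A (Fin.succ k) m = S k m := fun _ _ => rfl
  have hAB : A.det = B.det :=
    Matrix.det_eq_of_forall_col_eq_smul_add_pred (fun _ => c) (fun r => by simp [B])
      (fun r m => by simp [B])
  have hB : B.det = (Matrix.of fun k m : Fin n => S k m.succ - c * S k m.castSucc).det := by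
    have hcorner : B 0 0 = 1 := by simp [B, hA_zero]
    have hrow : ∀ m : Fin n, B 0 m.succ = 0 := fun m => by simp [B, hA_zero, pow_succ']
    have hminor : B.submatrix Fin.succ Fin.succ =
        Matrix.of fun k m : Fin n => S k m.succ - c * S k m.castSucc := by
      ext k m
      simp [B, hA_succ]
    rw [Matrix.det_succ_row_zero, Fin.sum_univ_succ]
    simp [hcorner, hrow, hminor]
  have hA : (A.updateCol 0 fun r => ∑ m, p m * A r m).det =
      (∑ m, p m * c ^ (m : ℕ)) * (Matrix.of fun k m : Fin n => S k m.succ).det := by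
    have hminor : (A.updateCol 0 fun r => ∑ m, p m * A r m).submatrix Fin.succ Fin.succ =
        Matrix.of fun k m : Fin n => S k m.succ := by
      ext k m
      simp [hA_succ]
    rw [Matrix.det_succ_column_zero, Fin.sum_univ_succ]
    simp [hminor, hA_zero, hA_succ, h]
  rw [← hB, ← hAB, ← hA]
  simpa using (Matrix.det_updateCol_sum A 0 p).symm

/-! ### The weight and its moments -/

/-- The weight `∏ j, (q x / b j)_∞ / (a j x)_∞` against which the Jackson sum is taken in each of
its variables. Taking `b j = 0` amounts to `b j = ∞`, because `0⁻¹ = 0`. -/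
noncomputable def jbarWeight {ι : Type*} [Fintype ι] (q : ℂ) (a b : ι → ℂ) (x : ℂ) : ℂ :=
  ∏ j, qp q (q * (b j)⁻¹ * x) / qp q (a j * x)

/-- The `m`-th moment of the weight on the lattice `x = z, z q, z q², …` with masses `v ^ ν`,
taken with respect to `-x`. -/
noncomputable def jbarMoment {ι : Type*} [Fintype ι] (q : ℂ) (a b : ι → ℂ) (v z : ℂ) (m : ℕ) : ℂ :=
  ∑' ν : ℕ, v ^ ν * jbarWeight q a b (z * q ^ ν) * (-(z * q ^ ν)) ^ m

/-- The polynomial in `X = -x` equal to `∏ j, (1 - x / b j) - v ∏ j, (1 - a j x)`, which is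
orthogonal to the weight on every lattice `x = b k q ^ ν`. -/
noncomputable def jbarPoly {ι : Type*} [Fintype ι] (a b : ι → ℂ) (v : ℂ) : ℂ[X] :=
  ∏ j, (1 + C (b j)⁻¹ * X) - C v * ∏ j, (1 + C (a j) * X)

section Weight

lemma norm_mul_pow_le {𝕜 : Type*} [NormedDivisionRing 𝕜] {q : 𝕜} (hq : ‖q‖ ≤ 1) (z : 𝕜) (m : ℕ) :
    ‖z * q ^ m‖ ≤ ‖z‖ := by
  rw [norm_mul, norm_pow]
  exact mul_le_of_le_one_right (norm_nonneg _) (pow_le_one₀ (norm_nonneg _) hq)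

variable {ι : Type*} [Fintype ι] {q : ℂ}

lemma jbarWeight_mul (hq : ‖q‖ < 1) {a : ι → ℂ} (b : ι → ℂ) {x : ℂ} (hx : ∀ j, a j * x ≠ 1) :
    jbarWeight q a b (q * x) * ∏ j, (1 - (b j)⁻¹ * (q * x)) =
      jbarWeight q a b x * ∏ j, (1 - a j * x) := by
  simp only [jbarWeight, ← prod_mul_distrib]
  refine prod_congr rfl fun j _ => ?_
  have hne : 1 - a j * x ≠ 0 := sub_ne_zero.2 (hx j).symm
  have hnum : qp q (q * (b j)⁻¹ * x) =
      (1 - (b j)⁻¹ * (q * x)) * qp q (q * (b j)⁻¹ * (q * x)) := by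
    rw [qp_eq_one_sub_mul_qp hq, mul_left_comm (b j)⁻¹ q x, ← mul_assoc q (b j)⁻¹ x,
      mul_left_comm (q * (b j)⁻¹)]
  rw [hnum, qp_eq_one_sub_mul_qp hq (a j * x), mul_left_comm q (a j) x, div_mul_eq_mul_div,
    div_mul_eq_mul_div, mul_comm (1 - a j * x), mul_div_mul_right _ _ hne, mul_comm]

lemma jbarWeight_update_mul [DecidableEq ι] (hq : ‖q‖ < 1) (hq0 : q ≠ 0) (a b : ι → ℂ) (i : ι)
    (x : ℂ) :
    jbarWeight q a (update b i (q * b i)) x = (1 - (b i)⁻¹ * x) * jbarWeight q a b x := by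
  have hi : qp q (q * (q * b i)⁻¹ * x) = (1 - (b i)⁻¹ * x) * qp q (q * (b i)⁻¹ * x) := by
    rw [mul_inv, mul_inv_cancel_left₀ hq0, qp_eq_one_sub_mul_qp hq, mul_assoc q]
  have hrest : ∀ j ∈ ({i}ᶜ : Finset ι), update b i (q * b i) j = b j := fun j hj =>
    update_of_ne (by simpa using hj) _ _
  simp only [jbarWeight]
  rw [Fintype.prod_eq_mul_prod_compl i, Fintype.prod_eq_mul_prod_compl i, update_self, hi,
    prod_congr rfl fun j hj => by rw [hrest j hj]]
  ring

lemma tendsto_jbarWeight_update [DecidableEq ι] {α : Type*} {l : Filter α} {c : α → ℂ}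
    (hq : ‖q‖ < 1) (hc : Tendsto (fun t => (c t)⁻¹) l (𝓝 0)) (a b : ι → ℂ) (i : ι) (x : ℂ) :
    Tendsto (fun t => jbarWeight q a (update b i (c t)) x) l
      (𝓝 (jbarWeight q a (update b i 0) x)) := by
  refine tendsto_finsetProd univ fun j _ => Tendsto.div_const ?_ _
  rcases eq_or_ne j i with rfl | hj
  · simpa using tendsto_qp_one hq (by simpa using (hc.const_mul q).mul_const x)
  · simpa only [update_of_ne hj] using tendsto_const_nhds

lemma exists_norm_jbarWeight_le (hq : ‖q‖ < 1) (a : ι → ℂ) (z : ℂ) (M : ℝ) :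
    ∃ C, 0 ≤ C ∧ ∀ b : ι → ℂ, (∀ j, ‖(b j)⁻¹‖ ≤ M) → ∀ ν : ℕ,
      ‖jbarWeight q a b (z * q ^ ν)‖ ≤ C := by
  choose D hD using fun j => exists_norm_inv_qp_mul_pow_le hq (a j * z)
  have hD0 : ∀ j, 0 ≤ D j := fun j => (norm_nonneg _).trans (hD j 0)
  refine ⟨∏ j, Real.exp (M * ‖z‖ / (1 - ‖q‖)) * D j,
    prod_nonneg fun j _ => mul_nonneg (Real.exp_pos _).le (hD0 j), fun b hb ν => ?_⟩
  rw [jbarWeight, norm_prod]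
  gcongr with j
  have hnum : ‖q * (b j)⁻¹ * (z * q ^ ν)‖ ≤ M * ‖z‖ := by
    rw [norm_mul, norm_mul]
    gcongr
    · exact (norm_nonneg _).trans (hb j)
    · exact (mul_le_of_le_one_left (norm_nonneg _) hq.le).trans (hb j)
    · exact norm_mul_pow_le hq.le z ν
  rw [div_eq_mul_inv, norm_mul, ← mul_assoc (a j)]
  refine mul_le_mul ((norm_qp_le hq _).trans ?_) (hD j ν) (norm_nonneg _) (Real.exp_pos _).le
  gcongr

lemma summable_jbarWeight_mul_pow (hq : ‖q‖ < 1) {v : ℂ} (hv : ‖v‖ < 1) (a b : ι → ℂ) (z : ℂ)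
    (m : ℕ) :
    Summable fun ν : ℕ => ‖v ^ ν * jbarWeight q a b (z * q ^ ν) * (-(z * q ^ ν)) ^ m‖ := by
  obtain ⟨C, hC0, hC⟩ := exists_norm_jbarWeight_le hq a z (∑ j, ‖(b j)⁻¹‖)
  have hb : ∀ j, ‖(b j)⁻¹‖ ≤ ∑ j, ‖(b j)⁻¹‖ := fun j =>
    single_le_sum (f := fun j => ‖(b j)⁻¹‖) (fun _ _ => norm_nonneg _) (mem_univ j)
  refine Summable.of_nonneg_of_le (fun _ => norm_nonneg _) (fun ν => ?_)
    (((summable_geometric_of_lt_one (norm_nonneg v) hv).mul_right C).mul_right (‖z‖ ^ m))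
  rw [norm_mul, norm_mul, norm_pow, norm_pow, norm_neg]
  gcongr
  · exact hC b hb ν
  · exact norm_mul_pow_le hq.le z ν

lemma hasSum_jbarMoment (hq : ‖q‖ < 1) {v : ℂ} (hv : ‖v‖ < 1) (a b : ι → ℂ) (z : ℂ) (m : ℕ) :
    HasSum (fun ν : ℕ => v ^ ν * jbarWeight q a b (z * q ^ ν) * (-(z * q ^ ν)) ^ m)
      (jbarMoment q a b v z m) :=
  (summable_jbarWeight_mul_pow hq hv a b z m).of_norm.hasSum

lemma jbarMoment_update_mul [DecidableEq ι] (hq : ‖q‖ < 1) (hq0 : q ≠ 0) {v : ℂ} (hv : ‖v‖ < 1)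
    (a b : ι → ℂ) (i : ι) (z : ℂ) (m : ℕ) :
    jbarMoment q a (update b i (q * b i)) v z m =
      jbarMoment q a b v z m + (b i)⁻¹ * jbarMoment q a b v z (m + 1) := by
  refine (((hasSum_jbarMoment hq hv a b z m).add
    ((hasSum_jbarMoment hq hv a b z (m + 1)).mul_left (b i)⁻¹)).congr_fun fun ν => ?_).tsum_eq
  rw [jbarWeight_update_mul hq hq0]
  ring

lemma jbarMoment_mul (q : ℂ) (a b : ι → ℂ) (v : ℂ) {z : ℂ} (hz : z ≠ 0) (m : ℕ) :
    jbarMoment q a b (q * v) z m = -z⁻¹ * jbarMoment q a b v z (m + 1) := by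
  rw [jbarMoment, jbarMoment, ← tsum_mul_left]
  refine tsum_congr fun ν => ?_
  field_simp
  ring

end Weight

section OrthogonalPolynomial

variable {ι : Type*} [Fintype ι]

lemma natDegree_prod_one_add_C_mul_X_le {R : Type*} [CommSemiring R] (f : ι → R) :
    (∏ j, (1 + C (f j) * X)).natDegree ≤ Fintype.card ι := by
  refine (natDegree_prod_le _ _).trans ((sum_le_card_nsmul univ _ 1 fun j _ => ?_).trans ?_)
  · compute_degree
  · simp

lemma coeff_prod_one_add_C_mul_X_card {R : Type*} [CommSemiring R] (f : ι → R) :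
    (∏ j, (1 + C (f j) * X)).coeff (Fintype.card ι) = ∏ j, f j := by
  have h := coeff_prod_of_natDegree_le univ (fun j => 1 + C (f j) * X) 1 fun j _ => by
    compute_degree
  simpa [coeff_one] using h

lemma eval_jbarPoly (a b : ι → ℂ) (v x : ℂ) :
    (jbarPoly a b v).eval (-x) = ∏ j, (1 - (b j)⁻¹ * x) - v * ∏ j, (1 - a j * x) := by
  simp [jbarPoly, eval_prod, sub_eq_add_neg]

lemma coeff_zero_jbarPoly (a b : ι → ℂ) (v : ℂ) : (jbarPoly a b v).coeff 0 = 1 - v := by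
  simp [jbarPoly, coeff_zero_prod]

lemma natDegree_jbarPoly_lt [Nonempty ι] {a b : ι → ℂ} {v : ℂ}
    (hv : v * ((∏ j, a j) * ∏ j, b j) = 1) : (jbarPoly a b v).natDegree < Fintype.card ι := by
  have hle : (jbarPoly a b v).natDegree ≤ Fintype.card ι :=
    (natDegree_sub_le_of_le (natDegree_prod_one_add_C_mul_X_le fun j => (b j)⁻¹)
      ((natDegree_C_mul_le _ _).trans (natDegree_prod_one_add_C_mul_X_le a))).trans_eq
        (max_self _)
  have htop : (jbarPoly a b v).coeff (Fintype.card ι) = 0 := by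
    rw [jbarPoly, coeff_sub, coeff_C_mul, coeff_prod_one_add_C_mul_X_card,
      coeff_prod_one_add_C_mul_X_card, prod_inv_distrib, sub_eq_zero]
    exact (eq_inv_of_mul_eq_one_left (by rwa [mul_assoc])).symm
  refine hle.lt_of_ne fun heq => Fintype.card_ne_zero (α := ι) ?_
  have hzero : jbarPoly a b v = 0 := leadingCoeff_eq_zero.1 (by rwa [leadingCoeff, heq])
  rw [← heq, hzero, natDegree_zero]

variable {q : ℂ}

lemma hasSum_jbarWeight_mul_eval (hq : ‖q‖ < 1) {v : ℂ} (hv : ‖v‖ < 1) (a b : ι → ℂ) (z : ℂ)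
    {P : ℂ[X]} {N : ℕ} (hP : P.natDegree < N) :
    HasSum (fun ν : ℕ => v ^ ν * jbarWeight q a b (z * q ^ ν) * P.eval (-(z * q ^ ν)))
      (∑ m ∈ range N, P.coeff m * jbarMoment q a b v z m) := by
  refine (hasSum_sum fun m _ =>
    (hasSum_jbarMoment hq hv a b z m).mul_left (P.coeff m)).congr_fun fun ν => ?_
  rw [eval_eq_sum_range' hP, mul_sum]
  exact sum_congr rfl fun m _ => by ring

/-- The functional equation of the weight makes the sum telescope, and its boundary term at
`x = b k` contains the factor `1 - x / b k`. -/
lemma sum_coeff_jbarPoly_mul_jbarMoment [Nonempty ι] (hq : ‖q‖ < 1) {a b : ι → ℂ} {v : ℂ}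
    (hv : ‖v‖ < 1) (hbal : v * ((∏ j, a j) * ∏ j, b j) = 1) {k : ι}
    (hpole : ∀ j, ∀ ν : ℕ, a j * (b k * q ^ ν) ≠ 1) :
    ∑ m ∈ range (Fintype.card ι), (jbarPoly a b v).coeff m * jbarMoment q a b v (b k) m = 0 := by
  have hbk : b k ≠ 0 := by
    have hB : ∏ j, b j ≠ 0 := right_ne_zero_of_mul (right_ne_zero_of_mul_eq_one hbal)
    exact prod_ne_zero_iff.1 hB k (mem_univ k)
  set G : ℕ → ℂ := fun ν =>
    v ^ ν * jbarWeight q a b (b k * q ^ ν) * ∏ j, (1 - (b j)⁻¹ * (b k * q ^ ν)) with hG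
  have hG_zero : G 0 = 0 := by
    have hk : ∏ j, (1 - (b j)⁻¹ * (b k * q ^ 0)) = 0 :=
      prod_eq_zero (mem_univ k) (by simp [hbk])
    simp only [hG, hk, mul_zero]
  have hG_succ : ∀ ν, G (ν + 1) =
      v ^ ν * jbarWeight q a b (b k * q ^ ν) * (v * ∏ j, (1 - a j * (b k * q ^ ν))) := by
    intro ν
    have hshift := jbarWeight_mul hq b fun j => hpole j ν
    simp only [hG, pow_succ' q, mul_left_comm (b k) q, mul_assoc] at hshift ⊢
    rw [hshift]
    ring
  have hG_summable : Summable G := by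
    refine (hasSum_jbarWeight_mul_eval hq hv a b (b k) (Nat.lt_succ_of_le <|
      natDegree_prod_one_add_C_mul_X_le fun j => (b j)⁻¹)).summable.congr fun ν => ?_
    simp [hG, eval_prod, sub_eq_add_neg]
  rw [← (hasSum_jbarWeight_mul_eval hq hv a b (b k) (natDegree_jbarPoly_lt hbal)).tsum_eq]
  calc _ = ∑' ν, (G ν - G (ν + 1)) := tsum_congr fun ν => by
          rw [eval_jbarPoly, hG_succ, mul_sub]
    _ = G 0 := by
        rw [hG_summable.tsum_sub ((summable_nat_add_iff 1).2 hG_summable),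
          hG_summable.tsum_eq_zero_add, add_sub_cancel_right]
    _ = 0 := hG_zero

end OrthogonalPolynomial

/-! ### The multiple sum as a function of `b i` -/

section MultipleSum

variable {q : ℂ} {n : ℕ}

lemma jbarTerm_eq (q : ℂ) (a b : Fin (n + 1) → ℂ) (i : Fin (n + 1)) (ν : Fin n → ℕ) :
    jbarTerm q a b i ν =
      (∏ k, (q * (∏ j, a j)⁻¹ * (∏ j, b j)⁻¹) ^ ν k *
        jbarWeight q a b (b (i.succAbove k) * q ^ ν k)) *
      ∏ k, ∏ l ∈ Ioi k, (b (i.succAbove k) * q ^ ν k - b (i.succAbove l) * q ^ ν l) := by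
  rw [prod_mul_distrib, prod_pow_eq_pow_sum]
  rfl

lemma tsum_jbarTerm_eq_det (hq : ‖q‖ < 1) {a b : Fin (n + 1) → ℂ}
    (hu : ‖q * (∏ j, a j)⁻¹ * (∏ j, b j)⁻¹‖ < 1) (i : Fin (n + 1)) :
    ∑' ν, jbarTerm q a b i ν = (Matrix.of fun k m : Fin n =>
      jbarMoment q a b (q * (∏ j, a j)⁻¹ * (∏ j, b j)⁻¹) (b (i.succAbove k)) m).det := by
  simp only [jbarTerm_eq]
  exact (hasSum_prod_mul_prod_sub fun k m =>
    summable_jbarWeight_mul_pow hq hu a b (b (i.succAbove k)) m).tsum_eq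

lemma prod_update_eq_mul_prod_succAbove {M : Type*} [CommMonoid M] (b : Fin (n + 1) → M)
    (i : Fin (n + 1)) (c : M) :
    ∏ j, update b i c j = c * ∏ k, b (i.succAbove k) := by
  simp [Fin.prod_univ_succAbove _ i]

lemma eval_jbarPoly_neg_apply {a b : Fin (n + 1) → ℂ} {v : ℂ}
    (hbal : v * ((∏ j, a j) * ∏ j, b j) = 1) (i : Fin (n + 1)) :
    (jbarPoly a b v).eval (-b i) =
      b i ^ n * (∏ j, (1 - (a j * b i)⁻¹)) * ∏ k, -(b (i.succAbove k))⁻¹ := by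
  have ha : ∀ j, a j ≠ 0 := fun j =>
    prod_ne_zero_iff.1 (left_ne_zero_of_mul (right_ne_zero_of_mul_eq_one hbal)) j (mem_univ j)
  have hb : ∀ j, b j ≠ 0 := fun j =>
    prod_ne_zero_iff.1 (right_ne_zero_of_mul (right_ne_zero_of_mul_eq_one hbal)) j (mem_univ j)
  have hfac : ∏ j, (1 - a j * b i) = (∏ j, (1 - (a j * b i)⁻¹)) * ∏ j, -(a j * b i) := by
    rw [← prod_mul_distrib]
    refine prod_congr rfl fun j _ => ?_
    field_simp [ha j, hb i]
    ring
  have hroot : ∏ j, (1 - (b j)⁻¹ * b i) = 0 :=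
    prod_eq_zero (mem_univ i) (by rw [inv_mul_cancel₀ (hb i), sub_self])
  have hv : v * ∏ j, -(a j * b i) = -(b i ^ n * ∏ k, -(b (i.succAbove k))⁻¹) := by
    have hva : v * ∏ j, a j = (b i)⁻¹ * (∏ k, b (i.succAbove k))⁻¹ := by
      rw [← mul_inv, ← Fin.prod_univ_succAbove b i]
      exact eq_inv_of_mul_eq_one_left (by rwa [mul_assoc])
    simp only [prod_neg, prod_mul_distrib, prod_const, card_univ, Fintype.card_fin,
      prod_inv_distrib]
    rw [mul_left_comm, ← mul_assoc v, hva, pow_succ (b i), pow_succ (-1 : ℂ)]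
    field_simp [hb i]
  rw [eval_jbarPoly, hroot, hfac, mul_left_comm, hv]
  ring

lemma tsum_jbarTerm_eq_mul_det (hq : ‖q‖ < 1) {a b : Fin (n + 1) → ℂ} {i : Fin (n + 1)}
    (hb : ∀ k, b (i.succAbove k) ≠ 0) (hv : ‖(∏ j, a j)⁻¹ * (∏ j, b j)⁻¹‖ < 1) :
    ∑' ν, jbarTerm q a b i ν = (∏ k, -(b (i.succAbove k))⁻¹) * (Matrix.of fun k m : Fin n =>
      jbarMoment q a b ((∏ j, a j)⁻¹ * (∏ j, b j)⁻¹) (b (i.succAbove k)) (m + 1)).det := by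
  have hu : ‖q * (∏ j, a j)⁻¹ * (∏ j, b j)⁻¹‖ < 1 := by
    rw [mul_assoc, norm_mul]
    exact mul_lt_one_of_nonneg_of_lt_one_left (norm_nonneg _) hq hv.le
  rw [tsum_jbarTerm_eq_det hq hu, ← Matrix.det_mul_column]
  simp only [mul_assoc q, jbarMoment_mul q a b _ (hb _), Matrix.of_apply]

lemma pow_mul_tsum_jbarTerm_update_mul_eq_det (hq : ‖q‖ < 1) (hq0 : q ≠ 0)
    {a b : Fin (n + 1) → ℂ} {i : Fin (n + 1)} (hbi : b i ≠ 0)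
    (hv : ‖(∏ j, a j)⁻¹ * (∏ j, b j)⁻¹‖ < 1) :
    b i ^ n * ∑' ν, jbarTerm q a (update b i (q * b i)) i ν = (Matrix.of fun k m : Fin n =>
      jbarMoment q a b ((∏ j, a j)⁻¹ * (∏ j, b j)⁻¹) (b (i.succAbove k)) (m + 1) +
        b i * jbarMoment q a b ((∏ j, a j)⁻¹ * (∏ j, b j)⁻¹) (b (i.succAbove k)) m).det := by
  have hu : q * (∏ j, a j)⁻¹ * (∏ j, update b i (q * b i) j)⁻¹ =
      (∏ j, a j)⁻¹ * (∏ j, b j)⁻¹ := by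
    rw [prod_update_eq_mul_prod_succAbove, mul_assoc q (b i), ← Fin.prod_univ_succAbove b i,
      mul_inv, mul_assoc, mul_left_comm q, mul_inv_cancel_left₀ hq0]
  have hscale : b i ^ n = ∏ _k : Fin n, b i := by simp
  rw [tsum_jbarTerm_eq_det hq (by rwa [hu]), hu, hscale, ← Matrix.det_mul_column]
  congr 1
  ext k m
  simp only [Matrix.of_apply, update_of_ne (Fin.succAbove_ne i k),
    jbarMoment_update_mul hq hq0 hv]
  field_simp
  ring

lemma tsum_jbarTerm_update_mul (hq : ‖q‖ < 1) (hq0 : q ≠ 0) {a b : Fin (n + 1) → ℂ}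
    (ha : ∀ j, a j ≠ 0) (hb : ∀ j, b j ≠ 0) (hv : ‖(∏ j, a j)⁻¹ * (∏ j, b j)⁻¹‖ < 1)
    (i : Fin (n + 1)) (hpole : ∀ j k, ∀ ν : ℕ, a j * (b (i.succAbove k) * q ^ ν) ≠ 1) :
    (1 - (∏ j, a j)⁻¹ * (∏ j, b j)⁻¹) * ∑' ν, jbarTerm q a (update b i (q * b i)) i ν =
      (∏ j, (1 - (a j * b i)⁻¹)) * ∑' ν, jbarTerm q a b i ν := by
  have hbal : (∏ j, a j)⁻¹ * (∏ j, b j)⁻¹ * ((∏ j, a j) * ∏ j, b j) = 1 := by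
    rw [← mul_inv, inv_mul_cancel₀]
    exact mul_ne_zero (prod_ne_zero_iff.2 fun j _ => ha j) (prod_ne_zero_iff.2 fun j _ => hb j)
  set v := (∏ j, a j)⁻¹ * (∏ j, b j)⁻¹
  set S : Fin n → Fin (n + 1) → ℂ := fun k m => jbarMoment q a b v (b (i.succAbove k)) m
  have horth : ∀ k, ∑ m : Fin (n + 1), (jbarPoly a b v).coeff m * S k m = 0 := fun k => by
    simpa [Finset.sum_range] using sum_coeff_jbarPoly_mul_jbarMoment hq hv hbal fun j => hpole j k
  have hdeg : (jbarPoly a b v).natDegree < n + 1 := by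
    simpa using natDegree_jbarPoly_lt hbal
  have hdet := mul_det_succ_sub_smul_castSucc horth (-b i)
  rw [← Finset.sum_range fun m => (jbarPoly a b v).coeff m * (-b i) ^ m,
    ← eval_eq_sum_range' hdeg, eval_jbarPoly_neg_apply hbal, Fin.val_zero,
    coeff_zero_jbarPoly] at hdet
  simp only [S, Fin.val_succ, Fin.val_castSucc, neg_mul, sub_neg_eq_add] at hdet
  rw [← pow_mul_tsum_jbarTerm_update_mul_eq_det hq hq0 (hb i) hv] at hdet
  refine mul_left_cancel₀ (pow_ne_zero n (hb i)) ?_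
  rw [tsum_jbarTerm_eq_mul_det hq (fun k => hb (i.succAbove k)) hv]
  linear_combination hdet

lemma exists_summable_norm_jbarTerm_update_le (hq : ‖q‖ < 1) {a b : Fin (n + 1) → ℂ}
    (hu : ‖q * (∏ j, a j)⁻¹ * (∏ j, b j)⁻¹‖ < 1) (i : Fin (n + 1)) :
    ∃ B : (Fin n → ℕ) → ℝ, Summable B ∧ ∀ c : ℂ, ‖c⁻¹‖ ≤ ‖(b i)⁻¹‖ →
      ∀ ν, ‖jbarTerm q a (update b i c) i ν‖ ≤ B ν := by
  set z : Fin n → ℂ := fun k => b (i.succAbove k)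
  set r := ‖q * (∏ j, a j)⁻¹ * (∏ j, b j)⁻¹‖ with hr
  choose C hC0 hC using fun k => exists_norm_jbarWeight_le hq a (z k) (∑ j, ‖(b j)⁻¹‖)
  refine ⟨fun ν => (∏ k, r ^ ν k * C k) * ∏ k, ∏ l ∈ Ioi k, (‖z k‖ + ‖z l‖), ?_, fun c hc ν => ?_⟩
  · refine (hasSum_prod_apply (f := fun k t => r ^ t * C k) fun k => ?_).summable.mul_right _
    exact ((summable_geometric_of_lt_one (norm_nonneg _) hu).mul_right (C k)).norm
  have hinv : ∀ j, ‖(update b i c j)⁻¹‖ ≤ ∑ j, ‖(b j)⁻¹‖ := by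
    intro j
    refine le_trans ?_ (single_le_sum (f := fun j => ‖(b j)⁻¹‖)
      (fun _ _ => norm_nonneg _) (mem_univ j))
    rcases eq_or_ne j i with rfl | hj
    · simpa using hc
    · simp [hj]
  have hle : ‖q * (∏ j, a j)⁻¹ * (∏ j, update b i c j)⁻¹‖ ≤ r := by
    rw [hr, prod_update_eq_mul_prod_succAbove, Fin.prod_univ_succAbove b i]
    simp only [mul_inv, norm_mul]
    gcongr
  rw [jbarTerm_eq]
  generalize q * (∏ j, a j)⁻¹ * (∏ j, update b i c j)⁻¹ = u at hle
  simp only [norm_prod, norm_mul, norm_pow, update_of_ne (Fin.succAbove_ne i _)]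
  gcongr with k _ k _ l _
  · exact prod_nonneg fun k _ => mul_nonneg (pow_nonneg (norm_nonneg _) _) (hC0 k)
  · exact hC k _ hinv _
  · exact norm_sub_le_of_le (norm_mul_pow_le hq.le _ _) (norm_mul_pow_le hq.le _ _)

lemma summable_jbarTerm (hq : ‖q‖ < 1) {a b : Fin (n + 1) → ℂ}
    (hu : ‖q * (∏ j, a j)⁻¹ * (∏ j, b j)⁻¹‖ < 1) (i : Fin (n + 1)) :
    Summable (jbarTerm q a b i) := by
  obtain ⟨B, hB, hle⟩ := exists_summable_norm_jbarTerm_update_le hq hu i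
  exact hB.of_norm_bounded fun ν => by simpa using hle (b i) le_rfl ν

lemma tendsto_jbarTerm_update {α : Type*} {l : Filter α} {c : α → ℂ} (hq : ‖q‖ < 1)
    (hc : Tendsto (fun t => (c t)⁻¹) l (𝓝 0)) (a b : Fin (n + 1) → ℂ) (i : Fin (n + 1))
    (ν : Fin n → ℕ) :
    Tendsto (fun t => jbarTerm q a (update b i (c t)) i ν) l
      (𝓝 (jbarTerm q a (update b i 0) i ν)) := by
  simp only [jbarTerm_eq, update_of_ne (Fin.succAbove_ne i _), prod_update_eq_mul_prod_succAbove,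
    mul_inv, inv_zero]
  exact (tendsto_finsetProd univ fun k _ => (((hc.mul_const _).const_mul _).pow (ν k)).mul
    (tendsto_jbarWeight_update hq hc a b i _)).mul_const _

lemma jbarTerm_update_zero_eq_zero (q : ℂ) (a b : Fin (n + 1) → ℂ) (i : Fin (n + 1))
    {ν : Fin n → ℕ} (hν : ν ≠ 0) : jbarTerm q a (update b i 0) i ν = 0 := by
  have hsum : ∑ k, ν k ≠ 0 := fun h => hν (funext (by simpa using h))
  simp [jbarTerm, prod_update_eq_mul_prod_succAbove, hsum]

lemma tendsto_tsum_jbarTerm_update {α : Type*} {l : Filter α} {c : α → ℂ} (hq : ‖q‖ < 1)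
    {a b : Fin (n + 1) → ℂ} (hu : ‖q * (∏ j, a j)⁻¹ * (∏ j, b j)⁻¹‖ < 1) {i : Fin (n + 1)}
    (hbi : b i ≠ 0) (hc : Tendsto (fun t => (c t)⁻¹) l (𝓝 0)) :
    Tendsto (fun t => ∑' ν, jbarTerm q a (update b i (c t)) i ν) l
      (𝓝 (jbarTerm q a (update b i 0) i 0)) := by
  obtain ⟨B, hB, hle⟩ := exists_summable_norm_jbarTerm_update_le hq hu i
  have hsmall : ∀ᶠ t in l, ‖(c t)⁻¹‖ ≤ ‖(b i)⁻¹‖ :=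
    hc.norm.eventually_le_const (by simpa using hbi)
  rw [← tsum_eq_single (L := .unconditional _) 0 fun ν hν =>
    jbarTerm_update_zero_eq_zero q a b i hν]
  exact tendsto_tsum_of_dominated_convergence hB
    (fun ν => tendsto_jbarTerm_update hq hc a b i ν) (hsmall.mono fun t ht => hle (c t) ht)

lemma tsum_jbarTerm_update_div_pow (hq : ‖q‖ < 1) (hq0 : q ≠ 0) {a b : Fin (n + 1) → ℂ}
    (ha : ∀ j, a j ≠ 0) (hb : ∀ j, b j ≠ 0) (hu : ‖q * (∏ j, a j)⁻¹ * (∏ j, b j)⁻¹‖ < 1)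
    (i : Fin (n + 1)) (hpole : ∀ j k, ∀ ν : ℕ, a j * (b (i.succAbove k) * q ^ ν) ≠ 1) (N : ℕ) :
    (1 - q ^ N * (q * (∏ j, a j)⁻¹ * (∏ j, b j)⁻¹)) *
        ∑' ν, jbarTerm q a (update b i (b i / q ^ N)) i ν =
      (∏ j, (1 - q ^ N * (q * (a j)⁻¹ * (b i)⁻¹))) *
        ∑' ν, jbarTerm q a (update b i (b i / q ^ (N + 1))) i ν := by
  set b' := update b i (b i / q ^ (N + 1)) with hb'
  have hb'_ne : ∀ j, b' j ≠ 0 := by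
    refine (forall_update_iff b fun _ x => x ≠ 0).2 ⟨?_, fun j _ => hb j⟩
    exact div_ne_zero (hb i) (pow_ne_zero _ hq0)
  have hv : (∏ j, a j)⁻¹ * (∏ j, b' j)⁻¹ = q ^ N * (q * (∏ j, a j)⁻¹ * (∏ j, b j)⁻¹) := by
    rw [hb', prod_update_eq_mul_prod_succAbove, Fin.prod_univ_succAbove b i]
    simp only [mul_inv, inv_div]
    ring
  have hv_lt : ‖q ^ N * (q * (∏ j, a j)⁻¹ * (∏ j, b j)⁻¹)‖ < 1 := by
    rw [mul_comm]
    exact (norm_mul_pow_le hq.le _ N).trans_lt hu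
  have hstep : update b i (b i / q ^ N) = update b' i (q * b' i) := by
    rw [hb', update_idem, update_self, pow_succ', ← mul_div_assoc, mul_div_mul_left _ _ hq0]
  have hfac : ∀ j, q ^ N * (q * (a j)⁻¹ * (b i)⁻¹) = (a j * b' i)⁻¹ := by
    intro j
    rw [hb', update_self, mul_inv, inv_div]
    ring
  simp only [hfac, hstep, ← hv]
  refine tsum_jbarTerm_update_mul hq hq0 ha hb'_ne (by rwa [hv]) i fun j k ν => ?_
  rw [hb', update_of_ne (Fin.succAbove_ne i k)]
  exact hpole j k ν

lemma qp_mul_tsum_jbarTerm (hq : ‖q‖ < 1) (hq0 : q ≠ 0) {a b : Fin (n + 1) → ℂ}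
    (ha : ∀ j, a j ≠ 0) (hb : ∀ j, b j ≠ 0) (hu : ‖q * (∏ j, a j)⁻¹ * (∏ j, b j)⁻¹‖ < 1)
    (i : Fin (n + 1)) (hpole : ∀ j k, ∀ ν : ℕ, a j * (b (i.succAbove k) * q ^ ν) ≠ 1) :
    qp q (q * (∏ j, a j)⁻¹ * (∏ j, b j)⁻¹) * ∑' ν, jbarTerm q a b i ν =
      (∏ j, qp q (q * (a j)⁻¹ * (b i)⁻¹)) * jbarTerm q a (update b i 0) i 0 := by
  have hc : Tendsto (fun N : ℕ => (b i / q ^ N)⁻¹) atTop (𝓝 0) := by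
    simpa [div_eq_mul_inv] using
      (tendsto_pow_atTop_nhds_zero_of_norm_lt_one hq).mul_const (b i)⁻¹
  simpa using qp_mul_eq_prod_qp_mul_of_tendsto hq (tendsto_tsum_jbarTerm_update hq hu (hb i) hc)
    (tsum_jbarTerm_update_div_pow hq hq0 ha hb hu i hpole)

lemma jbarTerm_update_zero_mul_prod_th (hq : ‖q‖ < 1) {a b : Fin (n + 1) → ℂ}
    {i : Fin (n + 1)} (hb : ∀ k, b (i.succAbove k) ≠ 0)
    (hpole : ∀ j k, ∀ ν : ℕ, a j * (b (i.succAbove k) * q ^ ν) ≠ 1) :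
    jbarTerm q a (update b i 0) i 0 * ∏ k, ∏ j, th q (a j * b (i.succAbove k)) =
      qp q q ^ n * (∏ k, ∏ l ∈ Ioi k,
        b (i.succAbove k) * th q (b (i.succAbove l) / b (i.succAbove k))) *
      ∏ k, ∏ j, qp q (q * (a j)⁻¹ * (b (i.succAbove k))⁻¹) := by
  have hqp : ∀ j k, qp q (a j * b (i.succAbove k)) ≠ 0 := fun j k =>
    qp_ne_zero hq fun ν => by simpa only [mul_comm (q ^ ν), mul_assoc] using hpole j k ν
  have hweight : ∀ k, jbarWeight q a (update b i 0) (b (i.succAbove k)) *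
      ∏ j, th q (a j * b (i.succAbove k)) =
      (∏ l, qp q (q * (b (i.succAbove l))⁻¹ * b (i.succAbove k))) *
        ∏ j, qp q (q * (a j)⁻¹ * (b (i.succAbove k))⁻¹) := by
    intro k
    have hnum : ∏ j, qp q (q * (update b i 0 j)⁻¹ * b (i.succAbove k)) =
        ∏ l, qp q (q * (b (i.succAbove l))⁻¹ * b (i.succAbove k)) := by
      simp [Fin.prod_univ_succAbove _ i]
    have hden : ∏ j, qp q (a j * b (i.succAbove k)) ≠ 0 := prod_ne_zero_iff.2 fun j _ => hqp j k
    simp only [jbarWeight, th, prod_div_distrib, prod_mul_distrib, hnum]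
    rw [← mul_assoc, div_mul_cancel₀ _ hden]
    simp only [div_eq_mul_inv, mul_inv, mul_assoc]
  have hterm : jbarTerm q a (update b i 0) i 0 =
      (∏ k, jbarWeight q a (update b i 0) (b (i.succAbove k))) *
        ∏ k, ∏ l ∈ Ioi k, (b (i.succAbove k) - b (i.succAbove l)) := by
    simp [jbarTerm_eq]
  rw [← prod_qp_mul_prod_sub hq hb, hterm, mul_right_comm,
    ← prod_mul_distrib]
  simp only [hweight, prod_mul_distrib]
  ring

end MultipleSum

theorem jbar_reg_evaluation_general {q : ℂ} (hq0 : q ≠ 0) (hq : ‖q‖ < 1) {n : ℕ}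
    {a b : Fin (n + 1) → ℂ} (hbal : ‖q‖ < ‖(∏ j, a j) * ∏ j, b j‖) (i : Fin (n + 1))
    (hab : ∀ j k, k ≠ i → ∀ m : ℕ, a j * (b k * q ^ m) ≠ 1)
    (hbb : ∀ k l, k ≠ l → k ≠ i → l ≠ i → ∀ m : ℤ, b k / b l ≠ q ^ m) :
    Summable (jbarTerm q a b i) ∧
      jbarReg q a b i = (1 - q) ^ n * qp q q ^ n * (∏ j, ∏ k, qp q (q * (a j)⁻¹ * (b k)⁻¹)) /
        qp q (q * (∏ j, a j)⁻¹ * (∏ j, b j)⁻¹) := by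
  have hne : (∏ j, a j) * ∏ j, b j ≠ 0 := norm_pos_iff.1 ((norm_nonneg q).trans_lt hbal)
  have ha : ∀ j, a j ≠ 0 := fun j => prod_ne_zero_iff.1 (left_ne_zero_of_mul hne) j (mem_univ j)
  have hb : ∀ j, b j ≠ 0 := fun j => prod_ne_zero_iff.1 (right_ne_zero_of_mul hne) j (mem_univ j)
  have hu : ‖q * (∏ j, a j)⁻¹ * (∏ j, b j)⁻¹‖ < 1 := by
    rwa [mul_assoc, ← mul_inv, ← div_eq_mul_inv, norm_div, div_lt_one (norm_pos_iff.2 hne)]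
  have hpole : ∀ j k, ∀ ν : ℕ, a j * (b (i.succAbove k) * q ^ ν) ≠ 1 := fun j k =>
    hab j _ (Fin.succAbove_ne i k)
  have htheta : ∏ k : Fin n, ∏ l ∈ Ioi k,
      b (i.succAbove k) * th q (b (i.succAbove l) / b (i.succAbove k)) ≠ 0 :=
    prod_ne_zero_iff.2 fun k _ => prod_ne_zero_iff.2 fun l hl => mul_ne_zero (hb _) <|
      th_ne_zero hq hq0 <| hbb _ _ (i.succAbove_right_injective.ne (mem_Ioi.1 hl).ne')
        (Fin.succAbove_ne i l) (Fin.succAbove_ne i k)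
  have heval := qp_mul_tsum_jbarTerm hq hq0 ha hb hu i hpole
  have hlead := jbarTerm_update_zero_mul_prod_th hq (fun k => hb (i.succAbove k)) hpole
  have hsplit : ∏ j, ∏ k, qp q (q * (a j)⁻¹ * (b k)⁻¹) =
      (∏ j, qp q (q * (a j)⁻¹ * (b i)⁻¹)) *
        ∏ k, ∏ j, qp q (q * (a j)⁻¹ * (b (i.succAbove k))⁻¹) := by
    rw [Finset.prod_comm, Fin.prod_univ_succAbove _ i]
  refine ⟨summable_jbarTerm hq hu i, ?_⟩
  rw [jbarReg, jbarSum, hsplit, div_eq_div_iff htheta (qp_ne_zero_of_norm_lt_one hq hu)]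
  linear_combination (1 - q) ^ n * ((∏ k, ∏ j, th q (a j * b (i.succAbove k))) * heval +
    (∏ j, qp q (q * (a j)⁻¹ * (b i)⁻¹)) * hlead)

/-- Evaluation of the regularized truncated dual Dixon–Anderson sum. -/
theorem jbar_reg_evaluation
    (q : ℝ) (hq0 : 0 < q) (hq1 : q < 1) (n : ℕ) (hn : 1 ≤ n)
    (a b : Fin (n + 1) → ℂ) (ha : ∀ i, a i ≠ 0) (hb : ∀ i, b i ≠ 0)
    (hbal : (q : ℝ) < ‖(∏ j, a j) * ∏ j, b j‖)
    (i : Fin (n + 1))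
    (hab : ∀ j k, k ≠ i → ∀ m : ℤ, a j * b k ≠ (q : ℂ) ^ m)
    (hbb : ∀ k l, k ≠ l → k ≠ i → l ≠ i → ∀ m : ℤ, b k / b l ≠ (q : ℂ) ^ m) :
    Summable (jbarTerm (q : ℂ) a b i) ∧
      jbarReg (q : ℂ) a b i =
        (1 - (q : ℂ)) ^ n * qp (q : ℂ) (q : ℂ) ^ n *
          (∏ j, ∏ k, qp (q : ℂ) ((q : ℂ) * (a j)⁻¹ * (b k)⁻¹)) /
          qp (q : ℂ) ((q : ℂ) * (∏ j, a j)⁻¹ * (∏ j, b j)⁻¹) := by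
  have hq0' : (q : ℂ) ≠ 0 := Complex.ofReal_ne_zero.2 hq0.ne'
  have hnorm : ‖(q : ℂ)‖ = q := by rw [Complex.norm_real, Real.norm_of_nonneg hq0.le]
  have hpole : ∀ j k, k ≠ i → ∀ m : ℕ, a j * (b k * (q : ℂ) ^ m) ≠ 1 := fun j k hk m h =>
    hab j k hk (-m) (by
      rw [zpow_neg, zpow_natCast]
      exact eq_inv_of_mul_eq_one_left (by rwa [mul_assoc]))
  exact jbar_reg_evaluation_general hq0' (by rwa [hnorm]) (by rwa [hnorm]) i hpole hbb
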